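/- Let p be an odd prime, let λ be a bar-partition with p-bar core λ_(p̄) and p-bar cocore λ^[p̄], and let σ be an automorphism of ℚ̄ over ℚ that fixes every root of unity whose order is coprime to p. Then τ(λ,σ) = τ(λ_(p̄),σ)·τ(λ^[p̄],σ). -/

import Mathlib

open scoped BigOperators

/-- A bar-partition: a finite set of distinct positive parts. -/
structure BarPartition where
  parts : Finset ℕ
  zero_not_mem : 0 ∉ parts

namespace BarPartition

/-- The size `|λ|` of a bar-partition: the sum of its parts. -/
def size (l : BarPartition) : ℕ := ∑ a ∈ l.parts, a

/-- The length `ℓ(λ)` of a bar-partition: its number of parts. -/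
def length (l : BarPartition) : ℕ := l.parts.card

/-- The sign `sgn(λ) = (-1)^(|λ| - ℓ(λ))` of a bar-partition. -/
def sgn (l : BarPartition) : ℤ := (-1) ^ (l.size - l.length)

/-- The empty bar-partition. -/
def empty : BarPartition := ⟨∅, by simp⟩

end BarPartition

/-- One `t`-bar removal step: replace a part `a > t` by `a - t` (if `a - t` is not already a
part), delete a part equal to `t`, or delete two parts whose sum is `t`. -/
def BarRemoval (t : ℕ) (μ ν : BarPartition) : Prop :=
  (∃ a ∈ μ.parts, t < a ∧ a - t ∉ μ.parts ∧ ν.parts = insert (a - t) (μ.parts.erase a)) ∨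
  (t ∈ μ.parts ∧ ν.parts = μ.parts.erase t) ∨
  (∃ a ∈ μ.parts, ∃ b ∈ μ.parts, a ≠ b ∧ a + b = t ∧ ν.parts = (μ.parts.erase a).erase b)

/-- A `t`-bar core: a bar-partition admitting no `t`-bar removal. -/
def IsBarCore (t : ℕ) (κ : BarPartition) : Prop := ∀ ν, ¬ BarRemoval t κ ν

/-- `κ` is the `t`-bar core of `λ`: it is obtained from `λ` by a (maximal) sequence of `t`-bar
removals and admits no further removal. -/
def IsBarCoreOf (t : ℕ) (l κ : BarPartition) : Prop :=
  Relation.ReflTransGen (BarRemoval t) l κ ∧ IsBarCore t κ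

/-- `λ` has empty `t`-bar core. -/
def HasEmptyBarCore (t : ℕ) (l : BarPartition) : Prop :=
  Relation.ReflTransGen (BarRemoval t) l BarPartition.empty

/-- The twisted runner at `r` (for `1 ≤ r ≤ (t-1)/2`) of the `t`-bar-abacus of `λ`, as a set
of integers: position `i ≥ 0` (above the fence) carries a bead iff `t*i + r` is a part of `λ`,
and position `i < 0` (slot `j = -(i+1)` below the fence) carries a bead iff `t*j + (t - r)` is
*not* a part of `λ` (beads and empty slots of runner `t - r` are interchanged). -/
def twistedRunner (t r : ℕ) (l : BarPartition) : Set ℤ :=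
  {i : ℤ | (0 ≤ i ∧ t * i.toNat + r ∈ l.parts) ∨
           (i < 0 ∧ t * (-(i + 1)).toNat + (t - r) ∉ l.parts)}

/-- Two bar-partitions have the same `t`-bar quotient: the runners `0` agree, and for each
`1 ≤ r ≤ (t-1)/2` the twisted runners differ by a shift (the shift by the unique balancing
integer produces the Frobenius symbol of the quotient component, so shift-equivalent twisted
runners are exactly those with equal quotient component). -/
def HasSameBarQuotient (t : ℕ) (l m : BarPartition) : Prop :=
  (∀ k : ℕ, t * k ∈ l.parts ↔ t * k ∈ m.parts) ∧
  ∀ r : ℕ, 1 ≤ r → 2 * r < t →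
    ∃ c : ℤ, twistedRunner t r m = (fun i => i + c) '' twistedRunner t r l

/-- `m` is the `t`-bar cocore of `l`: the unique bar-partition with empty `t`-bar core and the
same `t`-bar quotient as `l`. -/
def IsBarCocoreOf (t : ℕ) (l m : BarPartition) : Prop :=
  HasEmptyBarCore t m ∧ HasSameBarQuotient t l m

/-- A fixed algebraic closure of `ℚ`. -/
abbrev Qbar := AlgebraicClosure ℚ

/-- `σ` is a `σ_p`-type automorphism of `ℚ̄`: it raises every root of unity of order coprime
to `p` to its `p`-th power, and fixes every root of unity of `p`-power order. -/
def IsSigmaPType (p : ℕ) (σ : Qbar ≃ₐ[ℚ] Qbar) : Prop :=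
  (∀ (ζ : Qbar) (n : ℕ), 0 < n → Nat.Coprime n p → ζ ^ n = 1 → σ ζ = ζ ^ p) ∧
  (∀ (ζ : Qbar) (k : ℕ), ζ ^ (p ^ k) = 1 → σ ζ = ζ)

/-- The discriminant `D_λ` attached to a bar-partition `λ` of `n` with `k` parts:
`2·(−1)^((n−k+1)/2)·λ₁⋯λ_k` if `n − k` is odd, and `(−1)^((n−k)/2)·λ₁⋯λ_k` if `n − k` is
even. -/
def barDisc (l : BarPartition) : ℤ :=
  if (l.size - l.length) % 2 = 1 then
    2 * (-1) ^ ((l.size - l.length + 1) / 2) * ∏ a ∈ l.parts, (a : ℤ)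
  else
    (-1) ^ ((l.size - l.length) / 2) * ∏ a ∈ l.parts, (a : ℤ)

/-!
The sign `τ(D, σ)` is multiplicative in `D`, and it is `1` when `D` is a square in the fixed field
of `σ`. That field contains all roots of unity of order coprime to `p`, so it contains `√-1` and
`√2 = ζ₈ + ζ₈⁻¹`, and by quadratic Gauss sums `√(±q)` for every odd prime `q ≠ p`. Hence every
integer coprime to `p` is a square there, and `D_λ` agrees up to squares with the product of the
parts of `λ` divisible by `p`. These parts form runner `0` of the abacus: the core has none, and
the cocore has the same ones as `λ`. So the product of the three discriminants is a square in the
fixed field.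
-/

theorem barDisc_ne_zero (l : BarPartition) : barDisc l ≠ 0 := by
  have hprod : ∏ a ∈ l.parts, (a : ℤ) ≠ 0 := by
    simpa [Finset.prod_eq_zero_iff] using l.zero_not_mem
  unfold barDisc
  split_ifs <;> simpa using hprod

section BarCore

variable {t : ℕ} {κ : BarPartition}

theorem IsBarCore.self_notMem (h : IsBarCore t κ) : t ∉ κ.parts := fun ht =>
  h ⟨κ.parts.erase t, fun h0 => κ.zero_not_mem (Finset.mem_of_mem_erase h0)⟩
    (Or.inr (Or.inl ⟨ht, rfl⟩))

theorem IsBarCore.sub_mem (h : IsBarCore t κ) {a : ℕ} (ha : a ∈ κ.parts) (hta : t < a) :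
    a - t ∈ κ.parts := by
  by_contra hat
  have h0 : 0 ∉ insert (a - t) (κ.parts.erase a) := by
    simp only [Finset.mem_insert, Finset.mem_erase, not_or, not_and]
    exact ⟨by omega, fun _ => κ.zero_not_mem⟩
  exact h ⟨_, h0⟩ (Or.inl ⟨a, ha, hta, hat, rfl⟩)

theorem IsBarCore.not_dvd (h : IsBarCore t κ) {a : ℕ} (ha : a ∈ κ.parts) : ¬ t ∣ a := by
  rintro ⟨k, rfl⟩
  induction k with
  | zero => exact κ.zero_not_mem ha
  | succ k ih =>
    rcases (Nat.le_mul_of_pos_right t k.succ_pos).lt_or_eq with hlt | heq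
    · exact ih (by simpa [Nat.mul_succ] using h.sub_mem ha hlt)
    · exact h.self_notMem (heq ▸ ha)

end BarCore

section SquaresFromRootsOfUnity

variable {R : Type*} [CommRing R] [IsDomain R]

theorem isSquare_neg_one_of_isPrimitiveRoot {ζ : R} (hζ : IsPrimitiveRoot ζ 4) :
    IsSquare (-1 : R) := by
  have h : ζ ^ 2 = -1 := (hζ.pow (by norm_num) (by norm_num : 4 = 2 * 2)).eq_neg_one_of_two_right
  exact ⟨ζ, by rw [← h, sq]⟩

theorem isSquare_two_of_isPrimitiveRoot {ζ : R} (hζ : IsPrimitiveRoot ζ 8) :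
    IsSquare (2 : R) := by
  have h : ζ ^ 4 = -1 := (hζ.pow (by norm_num) (by norm_num : 8 = 4 * 2)).eq_neg_one_of_two_right
  -- `ζ - ζ ^ 3 = ζ + ζ⁻¹` because `ζ ^ 4 = -1`.
  exact ⟨ζ - ζ ^ 3, by linear_combination (2 - ζ ^ 2) * h⟩

variable [CharZero R]

theorem isSquare_quadraticChar_neg_one_mul_of_isPrimitiveRoot {q : ℕ} [Fact q.Prime] (hq : q ≠ 2)
    {ζ : R} (hζ : IsPrimitiveRoot ζ q) :
    IsSquare ((quadraticChar (ZMod q) (-1) : R) * q) := by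
  let χ : MulChar (ZMod q) R := (quadraticChar (ZMod q)).ringHomComp (Int.castRingHom R)
  have hχ : χ ≠ 1 := (MulChar.ringHomComp_ne_one_iff Int.cast_injective).2
    (quadraticChar_ne_one (by rwa [ZMod.ringChar_zmod_n]))
  have hχ₂ : χ.IsQuadratic := (quadraticChar_isQuadratic (ZMod q)).comp _
  have hgauss := gaussSum_sq hχ hχ₂ (AddChar.zmodChar_primitive_of_primitive_root q hζ)
  rw [ZMod.card] at hgauss
  exact hgauss ▸ IsSquare.sq _

theorem isSquare_natCast_of_coprime {m : ℕ} (hm : Odd m)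
    (hR : ∀ n ≠ 0, n.Coprime m → ∃ ζ : R, IsPrimitiveRoot ζ n) {n : ℕ} (hn : n.Coprime m) :
    IsSquare (n : R) := by
  have h2 : Nat.Coprime 2 m := Nat.coprime_two_left.2 hm
  induction n using Nat.recOnMul with
  | zero => simp
  | one => simp
  | prime q hq =>
    rcases eq_or_ne q 2 with rfl | hq2
    · obtain ⟨ζ, hζ⟩ := hR 8 (by norm_num) (h2.pow_left 3)
      exact_mod_cast isSquare_two_of_isPrimitiveRoot hζ
    · have : Fact q.Prime := ⟨hq⟩
      obtain ⟨i, hi⟩ := hR 4 (by norm_num) (h2.pow_left 2)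
      obtain ⟨ζ, hζ⟩ := hR q hq.ne_zero hn
      have hsq := isSquare_quadraticChar_neg_one_mul_of_isPrimitiveRoot hq2 hζ
      rcases quadraticChar_dichotomy (F := ZMod q) (a := -1) (by simp) with h | h
      · simpa [h] using hsq
      · simpa [h] using (isSquare_neg_one_of_isPrimitiveRoot hi).mul hsq
  | mul a b iha ihb =>
    rw [Nat.cast_mul]
    exact (iha hn.coprime_mul_right).mul (ihb hn.coprime_mul_left)

theorem exists_isSquare_barDisc_eq_mul_prod_dvd {p : ℕ} (hp : p.Prime) (hpodd : Odd p)
    (hR : ∀ n ≠ 0, n.Coprime p → ∃ ζ : R, IsPrimitiveRoot ζ n) (l : BarPartition) :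
    ∃ s : R, IsSquare s ∧ (barDisc l : R) = s * ∏ a ∈ l.parts with p ∣ a, (a : R) := by
  have h2 : Nat.Coprime 2 p := Nat.coprime_two_left.2 hpodd
  obtain ⟨i, hi⟩ := hR 4 (by norm_num) (h2.pow_left 2)
  have hneg := isSquare_neg_one_of_isPrimitiveRoot hi
  have htwo : IsSquare (2 : R) := by exact_mod_cast isSquare_natCast_of_coprime hpodd hR h2
  have hprod : IsSquare (∏ a ∈ l.parts with ¬ p ∣ a, (a : R)) :=
    Finset.isSquare_prod _ fun a ha => isSquare_natCast_of_coprime hpodd hR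
      ((hp.coprime_iff_not_dvd.2 (Finset.mem_filter.1 ha).2).symm)
  obtain ⟨s, hs, hdisc⟩ : ∃ s : R, IsSquare s ∧ (barDisc l : R) = s * ∏ a ∈ l.parts, (a : R) := by
    unfold barDisc
    split_ifs
    · exact ⟨_, htwo.mul (hneg.pow _), by push_cast; rfl⟩
    · exact ⟨_, hneg.pow _, by push_cast; rfl⟩
  refine ⟨_, hs.mul hprod, ?_⟩
  rw [hdisc, ← Finset.prod_filter_mul_prod_filter_not l.parts (p ∣ ·)]
  ring

end SquaresFromRootsOfUnity

theorem exists_isPrimitiveRoot_eqLocus {K : Type*} [Field K] [IsAlgClosed K] [CharZero K]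
    {σ : K →+* K} {n : ℕ} (hn : n ≠ 0) (hσ : ∀ ζ : K, ζ ^ n = 1 → σ ζ = ζ) :
    ∃ ζ : σ.eqLocus (RingHom.id K), IsPrimitiveRoot ζ n := by
  have : NeZero (n : K) := ⟨by exact_mod_cast hn⟩
  obtain ⟨ζ, hζ⟩ := HasEnoughRootsOfUnity.exists_primitiveRoot K n
  exact ⟨⟨ζ, hσ ζ hζ.pow_eq_one⟩,
    IsPrimitiveRoot.of_map_of_injective (f := Subring.subtype _) hζ Subtype.val_injective⟩

/-- The relation `τ(D, σ) = τ`: the endomorphism `σ` multiplies the square roots of `D` by the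
integer `τ`. The integer is not required to be `1` or `-1`: when `K` is algebraically closed of
characteristic zero and `D ≠ 0` is fixed by `σ`, this is automatic. For `D = 0` the relation holds
for every `τ`. -/
def IsSqrtSign {K : Type*} [Field K] (σ : K →+* K) (D : K) (τ : ℤ) : Prop :=
  ∀ α : K, α ^ 2 = D → σ α = τ * α

namespace IsSqrtSign

variable {K : Type*} [Field K] {σ : K →+* K} {D D' : K} {τ τ' : ℤ}

theorem one_of_isSquare {d : σ.eqLocus (RingHom.id K)} (hd : IsSquare d) :
    IsSqrtSign σ d 1 := by
  obtain ⟨δ, rfl⟩ := hd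
  have hδ : σ δ = δ := δ.2
  intro α hα
  rcases sq_eq_sq_iff_eq_or_eq_neg.1 (hα.trans (sq (δ : K)).symm) with rfl | rfl <;> simp [hδ]

variable [IsAlgClosed K]

theorem mul (h : IsSqrtSign σ D τ) (h' : IsSqrtSign σ D' τ') :
    IsSqrtSign σ (D * D') (τ * τ') := by
  intro α hα
  obtain ⟨β, rfl⟩ := IsAlgClosed.exists_pow_nat_eq D two_pos
  obtain ⟨γ, rfl⟩ := IsAlgClosed.exists_pow_nat_eq D' two_pos
  have hβγ : σ (β * γ) = ↑(τ * τ') * (β * γ) := by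
    rw [map_mul, h β rfl, h' γ rfl, Int.cast_mul, mul_mul_mul_comm]
  rcases sq_eq_sq_iff_eq_or_eq_neg.1 (hα.trans (mul_pow β γ 2).symm) with rfl | rfl
  · exact hβγ
  · rw [map_neg, hβγ, mul_neg]

variable [CharZero K]

theorem unique (hD : D ≠ 0) (h : IsSqrtSign σ D τ) (h' : IsSqrtSign σ D τ') : τ = τ' := by
  obtain ⟨α, rfl⟩ := IsAlgClosed.exists_pow_nat_eq D two_pos
  have hα : α ≠ 0 := ne_zero_pow two_ne_zero hD
  exact Int.cast_injective (mul_right_cancel₀ hα ((h α rfl).symm.trans (h' α rfl)))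

theorem eq_of_isSquare_mul (hD : D ≠ 0) (hD' : D' ≠ 0) {d : σ.eqLocus (RingHom.id K)}
    (hd : IsSquare d) (hmul : D * D' = d) (h : IsSqrtSign σ D τ) (h' : IsSqrtSign σ D' τ') :
    τ = τ' :=
  Int.eq_of_mul_eq_one <|
    (h.mul h').unique (mul_ne_zero hD hD') (hmul ▸ one_of_isSquare hd)

end IsSqrtSign

theorem tau_barLittlewood_of_fixes_pprime_roots_general {K : Type*} [Field K] [IsAlgClosed K]
    [CharZero K] {p : ℕ} (hp : p.Prime) (hpodd : Odd p) {l κ μ : BarPartition}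
    (hκ : ∀ a ∈ κ.parts, ¬ p ∣ a) (hμ : ∀ k : ℕ, p * k ∈ l.parts ↔ p * k ∈ μ.parts)
    (σ : K →+* K)
    (hσ : ∀ (ζ : K) (n : ℕ), 0 < n → Nat.Coprime n p → ζ ^ n = 1 → σ ζ = ζ)
    {τl τκ τμ : ℤ} (hτl : IsSqrtSign σ (barDisc l) τl) (hτκ : IsSqrtSign σ (barDisc κ) τκ)
    (hτμ : IsSqrtSign σ (barDisc μ) τμ) :
    τl = τκ * τμ := by
  have hroots : ∀ n ≠ 0, n.Coprime p → ∃ ζ : σ.eqLocus (RingHom.id K), IsPrimitiveRoot ζ n :=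
    fun n hn hnp => exists_isPrimitiveRoot_eqLocus hn (hσ · n hn.bot_lt hnp)
  have hdisc := exists_isSquare_barDisc_eq_mul_prod_dvd hp hpodd hroots
  obtain ⟨sl, hsl, hDl⟩ := hdisc l
  obtain ⟨sκ, hsκ, hDκ⟩ := hdisc κ
  obtain ⟨sμ, hsμ, hDμ⟩ := hdisc μ
  have hfilter : μ.parts.filter (p ∣ ·) = l.parts.filter (p ∣ ·) := by
    ext a
    simp only [Finset.mem_filter]
    exact and_congr_left fun ⟨k, hk⟩ => hk ▸ (hμ k).symm
  rw [Finset.filter_false_of_mem hκ, Finset.prod_empty, mul_one] at hDκ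
  rw [hfilter] at hDμ
  have hne (ν : BarPartition) : (barDisc ν : K) ≠ 0 := Int.cast_ne_zero.2 (barDisc_ne_zero ν)
  have hsq : IsSquare (barDisc l * (barDisc κ * barDisc μ) : σ.eqLocus (RingHom.id K)) := by
    rw [hDl, hDκ, hDμ, mul_left_comm, mul_mul_mul_comm, ← mul_assoc]
    exact (hsκ.mul (hsl.mul hsμ)).mul (IsSquare.mul_self _)
  exact hτl.eq_of_isSquare_mul (hne l) (mul_ne_zero (hne κ) (hne μ)) hsq (by push_cast; rfl)
    (hτκ.mul hτμ)

/-- Let `p` be an odd prime, `λ` a bar-partition with `p`-bar core `κ` and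
`p`-bar cocore `μ`, and let `σ` be an automorphism of `ℚ̄` over `ℚ` fixing every root of
unity of order coprime to `p`. Then `τ(λ,σ) = τ(κ,σ)·τ(μ,σ)`. -/
theorem tau_barLittlewood_of_fixes_pprime_roots (p : ℕ) (hp : p.Prime) (hpodd : Odd p)
    (l κ μ : BarPartition) (hκ : IsBarCoreOf p l κ) (hμ : IsBarCocoreOf p l μ)
    (σ : Qbar ≃ₐ[ℚ] Qbar)
    (hσ : ∀ (ζ : Qbar) (n : ℕ), 0 < n → Nat.Coprime n p → ζ ^ n = 1 → σ ζ = ζ)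
    (τl τκ τμ : ℤ)
    (hτl : ∀ α : Qbar, α ^ 2 = (barDisc l : Qbar) → σ α = (τl : Qbar) * α)
    (hτκ : ∀ α : Qbar, α ^ 2 = (barDisc κ : Qbar) → σ α = (τκ : Qbar) * α)
    (hτμ : ∀ α : Qbar, α ^ 2 = (barDisc μ : Qbar) → σ α = (τμ : Qbar) * α) :
    τl = τκ * τμ :=
  tau_barLittlewood_of_fixes_pprime_roots_general hp hpodd (fun _ => hκ.2.not_dvd) hμ.2.1
    (σ : Qbar →+* Qbar) hσ hτl hτκ hτμ
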